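/- For all sufficiently large n, there exists a colouring c : 𝔽₂ⁿ ∖ {0} → {1, 2, 3} with no rainbow triangle such that every linear subspace W of 𝔽₂ⁿ on whose nonzero vectors at most two colours appear satisfies dim W ≤ n/3 + 6·log₂(n). -/

import Mathlib

/-!
Colour `U × U × U` lexicographically: a vector is coloured by its first nonzero block, through a
fixed two-colouring `f` of `U` whose two values are renamed to `{0, 1}`, `{1, 2}` and `{2, 0}` in
the three blocks. In the first block where a triangle does not vanish, either one of its three
entries is zero and the other two coincide, so a colour repeats, or all three vertices are
coloured with the two colours of that block; so it is never rainbow. A subspace that misses a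
colour splits into one piece per block; two of the three blocks use the missing colour, and there
the piece is monochromatic for `f`. A random `f` has only monochromatic subspaces of logarithmic
dimension, so all but a third of the dimension is logarithmic.
-/

open Finset Module

section RainbowFree

variable {V V' α β : Type*} [AddZeroClass V] [AddZeroClass V']

/-- The colouring `c` of the nonzero vectors has no rainbow triangle `{x, y, x + y}`. The value
`c 0` is irrelevant. Meant for groups of exponent two, where `x ≠ y` says that `x + y ≠ 0`. -/
def RainbowFree (c : V → α) : Prop :=
  ¬ ∃ x y : V, x ≠ 0 ∧ y ≠ 0 ∧ x ≠ y ∧ c x ≠ c y ∧ c x ≠ c (x + y) ∧ c y ≠ c (x + y)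

theorem rainbowFree_fin_two (f : V → Fin 2) : RainbowFree f := by
  rintro ⟨x, y, -, -, -, hxy, hxz, hyz⟩
  omega

theorem RainbowFree.comp_left {c : V → α} (hc : RainbowFree c) (g : α → β) :
    RainbowFree (g ∘ c) := by
  rintro ⟨x, y, hx, hy, hne, hxy, hxz, hyz⟩
  exact hc ⟨x, y, hx, hy, hne, ne_of_apply_ne g hxy, ne_of_apply_ne g hxz, ne_of_apply_ne g hyz⟩

theorem RainbowFree.comp_injective {F : Type*} [FunLike F V' V] [AddMonoidHomClass F V' V]
    {c : V → α} (hc : RainbowFree c) {φ : F} (hφ : Function.Injective φ) :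
    RainbowFree (c ∘ φ) := by
  rintro ⟨x, y, hx, hy, hne, h⟩
  rw [Function.comp_apply, Function.comp_apply, Function.comp_apply, map_add] at h
  exact hc ⟨φ x, φ y, (map_ne_zero_iff φ hφ).2 hx, (map_ne_zero_iff φ hφ).2 hy, hφ.ne hne, h⟩

end RainbowFree

section AvoidingFinrankLE

variable (K : Type*) {V V' α β : Type*} [DivisionRing K] [AddCommGroup V] [Module K V]
  [AddCommGroup V'] [Module K V']

/-- Every subspace whose nonzero vectors all avoid the colour `i` has dimension at most `d`.
Dimension is `Module.finrank`, so this is meaningful only for finite-dimensional `V`. -/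
def AvoidingFinrankLE (c : V → α) (i : α) (d : ℕ) : Prop :=
  ∀ W : Submodule K V, (∀ v ∈ W, v ≠ 0 → c v ≠ i) → finrank K W ≤ d

variable {K}

theorem avoidingFinrankLE_finrank [FiniteDimensional K V] (c : V → α) (i : α) :
    AvoidingFinrankLE K c i (finrank K V) :=
  fun W _ => W.finrank_le

theorem AvoidingFinrankLE.comp_left {c : V → α} {i : α} {d : ℕ} (h : AvoidingFinrankLE K c i d)
    (g : α → β) : AvoidingFinrankLE K (g ∘ c) (g i) d :=
  fun W hW => h W fun v hv hv0 => ne_of_apply_ne g (hW v hv hv0)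

theorem AvoidingFinrankLE.comp_injective {c : V → α} {i : α} {d : ℕ}
    (h : AvoidingFinrankLE K c i d) {φ : V' →ₗ[K] V} (hφ : Function.Injective φ) :
    AvoidingFinrankLE K (c ∘ φ) i d := by
  intro W hW
  rw [(W.equivMapOfInjective φ hφ).finrank_eq]
  apply h
  rintro _ ⟨v, hv, rfl⟩ hv0
  exact hW v hv ((map_ne_zero_iff φ hφ).1 hv0)

end AvoidingFinrankLE

section LexColoring

variable {V₁ V₂ α : Type*}

section Zero

variable [Zero V₁]

open Classical in
/-- The lexicographic colouring of `V₁ × V₂`: a vector is coloured by its first component under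
`c₁` unless this component vanishes, and by its second component under `c₂` otherwise. It is the
substitution operation for colourings without rainbow triangles. -/
noncomputable def lexColoring (c₁ : V₁ → α) (c₂ : V₂ → α) (v : V₁ × V₂) : α :=
  if v.1 = 0 then c₂ v.2 else c₁ v.1

variable (c₁ : V₁ → α) (c₂ : V₂ → α)

@[simp]
theorem lexColoring_zero_left (y : V₂) : lexColoring c₁ c₂ (0, y) = c₂ y :=
  if_pos rfl

theorem lexColoring_of_ne_zero {x : V₁} (hx : x ≠ 0) (y : V₂) :
    lexColoring c₁ c₂ (x, y) = c₁ x :=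
  if_neg hx

end Zero

variable {c₁ : V₁ → α} {c₂ : V₂ → α} [AddCommGroup V₁] [AddCommGroup V₂]

theorem RainbowFree.lexColoring [Module (ZMod 2) V₁] (h₁ : RainbowFree c₁)
    (h₂ : RainbowFree c₂) : RainbowFree (lexColoring c₁ c₂) := by
  rintro ⟨⟨x₁, x₂⟩, ⟨y₁, y₂⟩, hx, hy, hne, hxy, hxz, hyz⟩
  rw [Prod.mk_add_mk] at hxz hyz
  by_cases hx₁ : x₁ = 0 <;> by_cases hy₁ : y₁ = 0
  · subst hx₁ hy₁
    refine h₂ ⟨x₂, y₂, ?_⟩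
    simp_all
  · subst hx₁
    simp [lexColoring_of_ne_zero _ _ hy₁] at hyz
  · subst hy₁
    simp [lexColoring_of_ne_zero _ _ hx₁] at hxz
  rw [lexColoring_of_ne_zero _ _ hx₁] at hxy hxz
  rw [lexColoring_of_ne_zero _ _ hy₁] at hxy hyz
  have hne₁ : x₁ ≠ y₁ := ne_of_apply_ne c₁ hxy
  have hadd : x₁ + y₁ ≠ 0 := by
    rwa [← ZModModule.sub_eq_add, sub_ne_zero]
  rw [lexColoring_of_ne_zero _ _ hadd] at hxz hyz
  exact h₁ ⟨x₁, y₁, hx₁, hy₁, hne₁, hxy, hxz, hyz⟩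

variable {K : Type*} [DivisionRing K] [Module K V₁] [Module K V₂]

theorem finrank_map_fst_add_finrank_comap_inr [FiniteDimensional K V₁] [FiniteDimensional K V₂]
    (W : Submodule K (V₁ × V₂)) :
    finrank K (W.map (LinearMap.fst K V₁ V₂)) + finrank K (W.comap (LinearMap.inr K V₁ V₂)) =
      finrank K W := by
  rw [← ((LinearMap.fst K V₁ V₂).domRestrict W).finrank_range_add_finrank_ker,
    LinearMap.range_domRestrict, LinearMap.ker_domRestrict, LinearMap.ker_fst,
    ← Submodule.finrank_map_subtype_eq, Submodule.map_comap_subtype, inf_comm,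
    ← Submodule.map_comap_eq,
    ← (Submodule.equivMapOfInjective _ LinearMap.inr_injective _).finrank_eq]

theorem AvoidingFinrankLE.lexColoring [FiniteDimensional K V₁] [FiniteDimensional K V₂]
    {i : α} {d₁ d₂ : ℕ} (h₁ : AvoidingFinrankLE K c₁ i d₁) (h₂ : AvoidingFinrankLE K c₂ i d₂) :
    AvoidingFinrankLE K (lexColoring c₁ c₂) i (d₁ + d₂) := by
  intro W hW
  rw [← finrank_map_fst_add_finrank_comap_inr W]
  refine add_le_add (h₁ _ ?_) (h₂ _ ?_)
  · rintro _ ⟨⟨x, y⟩, hv, rfl⟩ (hx : x ≠ 0)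
    simpa [lexColoring_of_ne_zero _ _ hx] using hW (x, y) hv (by simp [hx])
  · intro y hy hy0
    simpa using hW (0, y) hy (by simp [hy0])

end LexColoring

section RandomColoring

variable {α κ ι : Type*} [Fintype κ]

theorem card_filter_forall_mem_eq_mul [Fintype α] [DecidableEq α] [DecidableEq κ] (s : Finset α)
    (b : κ) :
    #{f : α → κ | ∀ a ∈ s, f a = b} * Fintype.card κ ^ #s = Fintype.card κ ^ Fintype.card α := by
  have hpi : ({f : α → κ | ∀ a ∈ s, f a = b} : Finset _) =
      Fintype.piFinset fun a => if a ∈ s then {b} else univ := by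
    ext f
    simp only [mem_filter, mem_univ, true_and, Fintype.mem_piFinset]
    refine forall_congr' fun a => ?_
    split_ifs with ha <;> simp [ha]
  rw [hpi, Fintype.card_piFinset]
  simp only [apply_ite Finset.card, card_singleton, card_univ]
  rw [prod_ite, prod_const_one, one_mul, prod_const, ← pow_add]
  simp [filter_not, card_sdiff_add_card_eq_card]

-- Union bound: a uniformly random colouring gives all of `S j` the colour `b` with probability at
-- most `(Fintype.card κ)⁻ᵏ`, and there are `Fintype.card ι * Fintype.card κ` such events.
theorem exists_coloring_forall_not_monochromatic [Finite α] [Nonempty κ] [Fintype ι]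
    {S : ι → Finset α} {k : ℕ} (hS : ∀ j, k ≤ #(S j))
    (hk : Fintype.card ι * Fintype.card κ < Fintype.card κ ^ k) :
    ∃ f : α → κ, ∀ j b, ∃ a ∈ S j, f a ≠ b := by
  classical
  have := Fintype.ofFinite α
  by_contra! hmono
  set q := Fintype.card κ
  let bad (p : ι × κ) : Finset (α → κ) := {f | ∀ a ∈ S p.1, f a = p.2}
  have hcover : (univ : Finset (α → κ)) ⊆ univ.biUnion bad := by
    intro f _
    obtain ⟨j, b, hf⟩ := hmono f
    exact mem_biUnion.2 ⟨(j, b), mem_univ _, by simpa [bad] using hf⟩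
  have hbad (p : ι × κ) : #(bad p) * q ^ k ≤ q ^ Fintype.card α := by
    rw [← card_filter_forall_mem_eq_mul (S p.1) p.2]
    gcongr
    exacts [Fintype.card_pos, hS p.1]
  have hcount : q ^ Fintype.card α * q ^ k ≤ q ^ Fintype.card α * (Fintype.card ι * q) := calc
    q ^ Fintype.card α * q ^ k = #(univ : Finset (α → κ)) * q ^ k := by
      rw [card_univ, Fintype.card_fun]
    _ ≤ (∑ p, #(bad p)) * q ^ k := by grw [card_le_card hcover, card_biUnion_le]
    _ = ∑ p, #(bad p) * q ^ k := sum_mul ..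
    _ ≤ ∑ _p : ι × κ, q ^ Fintype.card α := sum_le_sum fun p _ => hbad p
    _ = q ^ Fintype.card α * (Fintype.card ι * q) := by simp [q, mul_comm]
  exact hk.not_ge (Nat.le_of_mul_le_mul_left hcount (pow_pos Fintype.card_pos _))

variable {K V : Type*} [DivisionRing K] [AddCommGroup V] [Module K V]

open Classical in
theorem card_filter_mem_ne_zero [Fintype K] [Fintype V] (W : Submodule K V) :
    #{v | v ∈ W ∧ v ≠ 0} = Fintype.card K ^ finrank K W - 1 := by
  have herase : ({v | v ∈ W ∧ v ≠ 0} : Finset V) = ({v | v ∈ W} : Finset V).erase 0 := by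
    ext v
    simp [and_comm]
  rw [herase, card_erase_of_mem (by simp), ← Module.card_eq_pow_finrank, Fintype.card_subtype]

theorem exists_coloring_finrank_lt_of_monochromatic [Fintype K] [Fintype V] [Nonempty κ] {d : ℕ}
    (hd : Fintype.card V ^ d * Fintype.card κ < Fintype.card κ ^ (Fintype.card K ^ d - 1)) :
    ∃ f : V → κ, ∀ (W : Submodule K V) (b : κ),
      (∀ v ∈ W, v ≠ 0 → f v = b) → finrank K W < d := by
  classical
  let S (u : {u : Fin d → V // LinearIndependent K u}) : Finset V :=
    {v | v ∈ Submodule.span K (Set.range u.1) ∧ v ≠ 0}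
  have hS u : Fintype.card K ^ d - 1 ≤ #(S u) := by
    rw [card_filter_mem_ne_zero, finrank_span_eq_card u.2, Fintype.card_fin]
  have hcard : Fintype.card {u : Fin d → V // LinearIndependent K u} ≤ Fintype.card V ^ d := by
    simpa using Fintype.card_subtype_le fun u : Fin d → V => LinearIndependent K u
  obtain ⟨f, hf⟩ := exists_coloring_forall_not_monochromatic (κ := κ) hS (by grw [hcard]; exact hd)
  refine ⟨f, fun W b hW => ?_⟩
  by_contra! hdW
  obtain ⟨u, hu⟩ := exists_linearIndependent_of_le_finrank hdW
  obtain ⟨v, hv, hvb⟩ := hf ⟨W.subtype ∘ u, hu.map' W.subtype W.ker_subtype⟩ b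
  obtain ⟨hvspan, hv0⟩ := (mem_filter.1 hv).2
  have hspan : Submodule.span K (Set.range (W.subtype ∘ u)) ≤ W := by
    rw [Submodule.span_le]
    rintro _ ⟨j, rfl⟩
    exact (u j).2
  exact hvb (hW v (hspan hvspan) hv0)

theorem exists_fin_two_coloring_avoidingFinrankLE [Module (ZMod 2) V] [Finite V] {d : ℕ}
    (hd : finrank (ZMod 2) V * d + 2 < 2 ^ d) :
    ∃ f : V → Fin 2, ∀ b, AvoidingFinrankLE (ZMod 2) f b d := by
  have := Fintype.ofFinite V
  obtain ⟨f, hf⟩ := exists_coloring_finrank_lt_of_monochromatic (K := ZMod 2) (V := V)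
    (κ := Fin 2) (d := d) (by
      rw [Module.card_eq_pow_finrank (K := ZMod 2), ZMod.card, Fintype.card_fin, ← pow_mul,
        ← pow_succ]
      exact Nat.pow_lt_pow_right one_lt_two (by omega))
  refine ⟨f, fun b W hW => (hf W b.rev fun v hv hv0 => ?_).le⟩
  have := hW v hv hv0
  rw [Fin.ext_iff, Fin.val_rev]
  omega

end RandomColoring

section ThreeBlock

variable {U : Type*} [AddCommGroup U]

/-- The lexicographic three-colouring of `U × U × U` in which the two colours of `f` are renamed to
`{0, 1}`, `{1, 2}` and `{2, 0}` on the first, second and third block. -/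
noncomputable def threeBlockColoring (f : U → Fin 2) : U × U × U → Fin 3 :=
  lexColoring (![0, 1] ∘ f) (lexColoring (![1, 2] ∘ f) (![2, 0] ∘ f))

variable [Module (ZMod 2) U]

theorem rainbowFree_threeBlockColoring (f : U → Fin 2) : RainbowFree (threeBlockColoring f) :=
  have hf := rainbowFree_fin_two f
  (hf.comp_left _).lexColoring ((hf.comp_left _).lexColoring (hf.comp_left _))

theorem avoidingFinrankLE_threeBlockColoring [FiniteDimensional (ZMod 2) U] {f : U → Fin 2} {d : ℕ}
    (hf : ∀ b, AvoidingFinrankLE (ZMod 2) f b d) (i : Fin 3) :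
    AvoidingFinrankLE (ZMod 2) (threeBlockColoring f) i (finrank (ZMod 2) U + 2 * d) := by
  have htop (g : Fin 2 → Fin 3) := avoidingFinrankLE_finrank (K := ZMod 2) (g ∘ f) i
  rw [two_mul]
  match i with
  | 0 =>
    rw [add_left_comm]
    exact ((hf 0).comp_left ![0, 1]).lexColoring
      ((htop ![1, 2]).lexColoring ((hf 1).comp_left ![2, 0]))
  | 1 =>
    rw [add_comm, add_assoc]
    exact ((hf 1).comp_left ![0, 1]).lexColoring
      (((hf 0).comp_left ![1, 2]).lexColoring (htop ![2, 0]))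
  | 2 =>
    exact (htop ![0, 1]).lexColoring
      (((hf 1).comp_left ![1, 2]).lexColoring ((hf 0).comp_left ![2, 0]))

end ThreeBlock

theorem exists_rainbowFree_avoidingFinrankLE {V : Type*} [AddCommGroup V] [Module (ZMod 2) V]
    [FiniteDimensional (ZMod 2) V] {m d : ℕ} (hV : finrank (ZMod 2) V ≤ 3 * m)
    (hd : m * d + 2 < 2 ^ d) :
    ∃ c : V → Fin 3, RainbowFree c ∧ ∀ i, AvoidingFinrankLE (ZMod 2) c i (m + 2 * d) := by
  let U := Fin m → ZMod 2
  have hU : finrank (ZMod 2) U = m := finrank_fin_fun _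
  obtain ⟨f, hf⟩ := exists_fin_two_coloring_avoidingFinrankLE (V := U) (d := d) (by rwa [hU])
  obtain ⟨φ, hφ⟩ : ∃ φ : V →ₗ[ZMod 2] U × U × U, Function.Injective φ := by
    rw [← finrank_le_iff_exists_linearMap, finrank_prod, finrank_prod, hU]
    omega
  refine ⟨threeBlockColoring f ∘ φ, (rainbowFree_threeBlockColoring f).comp_injective hφ,
    fun i => AvoidingFinrankLE.comp_injective ?_ hφ⟩
  simpa only [hU] using avoidingFinrankLE_threeBlockColoring hf i

theorem div_three_add_one_mul_two_log_add_two_lt_two_pow {n : ℕ} (hn : 8 ≤ n) :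
    (n / 3 + 1) * (2 * Nat.log 2 n) + 2 < 2 ^ (2 * Nat.log 2 n) := by
  set L := Nat.log 2 n
  have hn_lt : n < 2 ^ L * 2 := by
    rw [← pow_succ]
    exact Nat.lt_pow_succ_log_self one_lt_two n
  have hL : 2 * L ≤ 2 ^ L := Nat.mul_le_pow (by decide) L
  have hblock : n / 3 + 1 + 1 ≤ 2 ^ L := by omega
  calc (n / 3 + 1) * (2 * L) + 2 ≤ (n / 3 + 1) * 2 ^ L + 2 := by gcongr
    _ < (n / 3 + 1) * 2 ^ L + 2 ^ L := by gcongr; omega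
    _ = (n / 3 + 1 + 1) * 2 ^ L := by ring
    _ ≤ 2 ^ L * 2 ^ L := by gcongr
    _ = 2 ^ (2 * L) := by rw [← pow_add, two_mul]

theorem stmt4_general {V : Type*} [AddCommGroup V] [Module (ZMod 2) V]
    [FiniteDimensional (ZMod 2) V] (hV : 8 ≤ finrank (ZMod 2) V) :
    ∃ c : V → Fin 3, RainbowFree c ∧ ∀ W : Submodule (ZMod 2) V,
      (∃ i : Fin 3, ∀ v ∈ W, v ≠ 0 → c v ≠ i) →
      (finrank (ZMod 2) W : ℝ) ≤
        (finrank (ZMod 2) V : ℝ) / 3 + 6 * Real.logb 2 (finrank (ZMod 2) V : ℝ) := by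
  set n := finrank (ZMod 2) V
  obtain ⟨c, hc, hrank⟩ := exists_rainbowFree_avoidingFinrankLE (V := V) (m := n / 3 + 1)
    (by omega) (div_three_add_one_mul_two_log_add_two_lt_two_pow hV)
  refine ⟨c, hc, fun W ⟨i, hi⟩ => ?_⟩
  have hlog : 3 ≤ Nat.log 2 n := Nat.le_log_of_pow_le one_lt_two hV
  have hW : 3 * finrank (ZMod 2) W ≤ n + 18 * Nat.log 2 n := by
    have := hrank i W hi
    omega
  have hW_real : 3 * (finrank (ZMod 2) W : ℝ) ≤ n + 18 * Nat.log 2 n := by exact_mod_cast hW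
  have hlogb : (Nat.log 2 n : ℝ) ≤ Real.logb 2 n := by exact_mod_cast Real.natLog_le_logb n 2
  linarith

/-- For all sufficiently large `n` there is a 3-colouring of the nonzero vectors of
`𝔽₂ⁿ` with no rainbow triangle, such that every subspace on whose nonzero vectors at
most two colours appear has dimension at most `n / 3 + 6 log₂ n`. -/
theorem stmt4 :
    ∃ N : ℕ, ∀ n : ℕ, N ≤ n →
      ∃ c : (Fin n → ZMod 2) → Fin 3,
        (¬ ∃ x y : Fin n → ZMod 2, x ≠ 0 ∧ y ≠ 0 ∧ x ≠ y ∧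
          c x ≠ c y ∧ c x ≠ c (x + y) ∧ c y ≠ c (x + y)) ∧
        ∀ W : Submodule (ZMod 2) (Fin n → ZMod 2),
          (∃ i : Fin 3, ∀ v ∈ W, v ≠ 0 → c v ≠ i) →
          (Module.finrank (ZMod 2) W : ℝ) ≤ (n : ℝ) / 3 + 6 * Real.logb 2 (n : ℝ) := by
  refine ⟨8, fun n hn => ?_⟩
  simpa [RainbowFree] using stmt4_general (V := Fin n → ZMod 2) (by simpa using hn)
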